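/- Fix the number of agents n ≥ 1 and consider the FI model with the lexicographic scoring vector s_i = 2^{m-i}. For m items and a vector k of nonnegative integers summing to m, let EU^k(a) denote the expected utility of agent a under the non-interleaving picking sequence k, and let K*_m be the set of vectors k maximizing min_a EU^k(a). Then for every ε > 0 there exists M such that for all m ≥ M and ALL k ∈ K*_m, ( max_a EU^k(a) - min_a EU^k(a) ) / ( Σ_a EU^k(a) ) < ε. -/

import Mathlib

/-- The `k` most preferred items of `S` under the ranking `σ` (where `σ r` is the item of
0-based rank `r`, so `σ.symm x` is the rank of item `x`): the items of `S` having fewer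
than `k` strictly better items inside `S`. -/
def topk {m : ℕ} (σ : Fin m ≃ Fin m) (S : Finset (Fin m)) (k : ℕ) : Finset (Fin m) :=
  S.filter fun x => (S.filter fun y => σ.symm y < σ.symm x).card < k

/-- Items remaining before the `i`-th agent (0-based) picks, under profile `P` (agent `i`
has ranking `P i`) and pick-count vector `k` (agent `i` picks `k i` items). -/
def remaining {m : ℕ} (P : ℕ → Fin m ≃ Fin m) (k : ℕ → ℕ) : ℕ → Finset (Fin m)
  | 0 => Finset.univ
  | i + 1 => remaining P k i \ topk (P i) (remaining P k i) (k i)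

/-- The set of items greedily picked by the `i`-th agent (0-based). -/
def alloc {m : ℕ} (P : ℕ → Fin m ≃ Fin m) (k : ℕ → ℕ) (i : ℕ) : Finset (Fin m) :=
  topk (P i) (remaining P k i) (k i)

/-- The utility of the `i`-th agent (0-based): the sum of the scores `s r` over the
1-based ranks `r` (in her own ranking) of the items she receives. -/
noncomputable def util {m : ℕ} (s : ℕ → ℝ) (P : ℕ → Fin m ≃ Fin m) (k : ℕ → ℕ)
    (i : ℕ) : ℝ :=
  ∑ x ∈ alloc P k i, s (((P i).symm x : ℕ) + 1)

/-- Extend a profile on `Fin n` to a profile indexed by `ℕ` (agents `≥ n` are irrelevant). -/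
def extendProfile {m : ℕ} (n : ℕ) (Q : Fin n → Fin m ≃ Fin m) : ℕ → Fin m ≃ Fin m :=
  fun i => if h : i < n then Q ⟨i, h⟩ else Equiv.refl _

/-- Expected utility of the `i`-th agent (0-based) in the full independence model. -/
noncomputable def EUFI (n m : ℕ) (s : ℕ → ℝ) (k : ℕ → ℕ) (i : ℕ) : ℝ :=
  (∑ Q : Fin n → Fin m ≃ Fin m, util s (extendProfile n Q) k i) /
    (Fintype.card (Fin n → Fin m ≃ Fin m) : ℝ)

/-- The lexicographic scoring vector for `m` items: `s_j = 2^(m-j)`. -/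
noncomputable def lexScore (m : ℕ) : ℕ → ℝ := fun j => (2 : ℝ) ^ (m - j)


/-!
If all agents but the last pick a fixed number `L` of items, then for large `m` every agent chooses
among almost all items and, having independent preferences, receives each of her `L` best items
with probability at least `1 - n * L / m`. The lexicographic score is concentrated on the top ranks,
so every agent expects almost the total score `T`. Hence the optimal egalitarian welfare is almost
`T`; as no utility exceeds `T`, the spread of an optimum is small compared with a single utility.
-/

open Finset Filter
open scoped BigOperators

section Picking

variable {m : ℕ}

lemma card_topk_le (σ : Equiv.Perm (Fin m)) (S : Finset (Fin m)) (k : ℕ) : #(topk σ S k) ≤ k := by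
  obtain hempty | hne := (topk σ S k).eq_empty_or_nonempty
  · simp [hempty]
  obtain ⟨worst, hworst, hmax⟩ := exists_max_image _ σ.symm hne
  have hsub : topk σ S k ⊆ insert worst {y ∈ S | σ.symm y < σ.symm worst} := by
    intro x hx
    obtain heq | hlt := (hmax x hx).eq_or_lt
    · exact mem_insert.2 (.inl (σ.symm.injective heq))
    · exact mem_insert_of_mem (mem_filter.2 ⟨(mem_filter.1 hx).1, hlt⟩)
  calc #(topk σ S k) ≤ #{y ∈ S | σ.symm y < σ.symm worst} + 1 :=
        (card_le_card hsub).trans (card_insert_le _ _)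
    _ ≤ k := (mem_filter.1 hworst).2

lemma mem_topk_of_rank_lt {σ : Equiv.Perm (Fin m)} {S : Finset (Fin m)} {k : ℕ} {r : Fin m}
    (hr : (r : ℕ) < k) (hS : σ r ∈ S) : σ r ∈ topk σ S k := by
  refine mem_filter.2 ⟨hS, lt_of_le_of_lt ?_ hr⟩
  calc #{y ∈ S | σ.symm y < σ.symm (σ r)} ≤ #(Iio r) :=
        card_le_card_of_injOn σ.symm (by simp [Set.MapsTo]) σ.symm.injective.injOn
    _ = r := Fin.card_Iio r

lemma le_card_remaining_add_sum (P : ℕ → Equiv.Perm (Fin m)) (k : ℕ → ℕ) (i : ℕ) :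
    m ≤ #(remaining P k i) + ∑ j ∈ range i, k j := by
  induction i with
  | zero => simp [remaining]
  | succ i ih =>
    have hpicked := card_topk_le (P i) (remaining P k i) (k i)
    have hleft := le_card_sdiff (topk (P i) (remaining P k i) (k i)) (remaining P k i)
    rw [sum_range_succ, remaining]
    lia

lemma remaining_congr {P P' : ℕ → Equiv.Perm (Fin m)} (k : ℕ → ℕ) {i : ℕ}
    (h : ∀ j < i, P j = P' j) : remaining P k i = remaining P' k i := by
  induction i with
  | zero => rfl
  | succ i ih =>
    rw [remaining, remaining, ih fun j hj => h j (hj.trans i.lt_succ_self), h i i.lt_succ_self]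

end Picking

section Scores

/-- The total score of the `L` best ranks, that is, the utility of an agent receiving exactly her
`L` most preferred items. Ranks are 1-based. -/
def topScore (s : ℕ → ℝ) (L : ℕ) : ℝ :=
  ∑ r ∈ range L, s (r + 1)

variable {s : ℕ → ℝ}

lemma topScore_nonneg (hs : 0 ≤ s) (L : ℕ) : 0 ≤ topScore s L := sum_nonneg fun _ _ => hs _

lemma topScore_mono (hs : 0 ≤ s) : Monotone (topScore s) := fun _ _ hL =>
  sum_le_sum_of_subset_of_nonneg (range_mono hL) fun _ _ _ => hs _

lemma sum_rank_lt_eq_topScore {m L : ℕ} (hL : L ≤ m) :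
    ∑ r : Fin m with r.val < L, s (r + 1) = topScore s L := by
  rw [sum_filter, Fin.sum_univ_eq_sum_range fun r => if r < L then s (r + 1) else 0, ← sum_filter,
    topScore]
  congr 1
  ext r
  simp only [mem_filter, mem_range]
  lia

lemma util_eq_sum_ranks {m : ℕ} (P : ℕ → Equiv.Perm (Fin m)) (k : ℕ → ℕ) (i : ℕ) :
    util s P k i = ∑ r : Fin m with P i r ∈ alloc P k i, s (r + 1) := by
  rw [util, sum_filter, ← Equiv.sum_comp (P i).symm]
  simp

lemma util_le_topScore (hs : 0 ≤ s) {m : ℕ} (P : ℕ → Equiv.Perm (Fin m)) (k : ℕ → ℕ) (i : ℕ) :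
    util s P k i ≤ topScore s m := by
  rw [util_eq_sum_ranks, topScore, ← Fin.sum_univ_eq_sum_range fun r => s (r + 1)]
  exact sum_le_sum_of_subset_of_nonneg (filter_subset _ _) fun _ _ _ => hs _

lemma sum_available_le_util (hs : 0 ≤ s) {m : ℕ} (P : ℕ → Equiv.Perm (Fin m)) {k : ℕ → ℕ}
    {i L : ℕ} (hL : L ≤ k i) :
    ∑ r : Fin m with r.val < L ∧ P i r ∈ remaining P k i, s (r + 1) ≤ util s P k i := by
  rw [util_eq_sum_ranks]
  refine sum_le_sum_of_subset_of_nonneg ?_ fun _ _ _ => hs _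
  exact monotone_filter_right _ fun r _ ⟨hr, hav⟩ => mem_topk_of_rank_lt (hr.trans_le hL) hav

end Scores

section ExpectedUtility

variable {n m : ℕ} {s : ℕ → ℝ} {k : ℕ → ℕ}

lemma EUFI_eq_expect (s : ℕ → ℝ) (k : ℕ → ℕ) (i : ℕ) :
    EUFI n m s k i = 𝔼 Q : Fin n → Equiv.Perm (Fin m), util s (extendProfile n Q) k i :=
  (Fintype.expect_eq_sum_div_card _).symm

lemma extendProfile_apply (Q : Fin n → Equiv.Perm (Fin m)) (i : Fin n) :
    extendProfile n Q i = Q i := by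
  simp [extendProfile]

lemma remaining_extendProfile_mul_mulSingle (Q : Fin n → Equiv.Perm (Fin m)) (k : ℕ → ℕ)
    (i : Fin n) (τ : Equiv.Perm (Fin m)) :
    remaining (extendProfile n (Q * Pi.mulSingle i τ)) k i =
      remaining (extendProfile n Q) k i := by
  refine remaining_congr k fun j hj => ?_
  have hne : (⟨j, hj.trans i.isLt⟩ : Fin n) ≠ i := fun h => hj.ne (congrArg Fin.val h)
  simp [extendProfile, hne]

/-- The probability that the item of (0-based) rank `r` of agent `i` is still available when she
comes to pick. -/
noncomputable def availableProb (k : ℕ → ℕ) (i : Fin n) (r : Fin m) : ℝ :=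
  𝔼 Q : Fin n → Equiv.Perm (Fin m),
    if Q i r ∈ remaining (extendProfile n Q) k i then 1 else 0

-- Exchanging two ranks in the ranking of agent `i` does not affect the agents picking before her.
lemma availableProb_eq_availableProb (k : ℕ → ℕ) (i : Fin n) (r r' : Fin m) :
    availableProb k i r = availableProb k i r' := by
  refine Fintype.expect_equiv (Equiv.mulRight (Pi.mulSingle i (Equiv.swap r r'))) _ _ fun Q => ?_
  simp [remaining_extendProfile_mul_mulSingle]

lemma expect_apply_mem {ι K : Type*} [Fintype ι] [DecidableEq ι] [Semifield K] [CharZero K]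
    (σ : Equiv.Perm ι) (S : Finset ι) :
    𝔼 r, (if σ r ∈ S then (1 : K) else 0) = #S / Fintype.card ι := by
  rw [Fintype.expect_eq_sum_div_card, Equiv.sum_comp σ fun x => if x ∈ S then (1 : K) else 0]
  simp

lemma availableProb_eq_expect_card_div (k : ℕ → ℕ) (i : Fin n) (r : Fin m) :
    availableProb k i r =
      𝔼 Q : Fin n → Equiv.Perm (Fin m), (#(remaining (extendProfile n Q) k i) / m : ℝ) := by
  have : Nonempty (Fin m) := ⟨r⟩
  calc availableProb k i r = 𝔼 r' : Fin m, availableProb k i r' := by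
        simp_rw [availableProb_eq_availableProb k i _ r, Fintype.expect_const]
    _ = _ := by
        simp_rw [availableProb]
        rw [expect_comm]
        simp_rw [expect_apply_mem, Fintype.card_fin]

lemma one_sub_picked_div_le_availableProb (k : ℕ → ℕ) (i : Fin n) (r : Fin m) :
    1 - (∑ j ∈ range i, k j : ℕ) / (m : ℝ) ≤ availableProb k i r := by
  rw [availableProb_eq_expect_card_div]
  refine le_expect univ_nonempty fun Q _ => ?_
  have hm : (0 : ℝ) < m := by exact_mod_cast r.pos
  have hcard : (m : ℝ) ≤ #(remaining (extendProfile n Q) k i) + (∑ j ∈ range i, k j : ℕ) := by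
    exact_mod_cast le_card_remaining_add_sum (extendProfile n Q) k i
  rw [one_sub_div hm.ne']
  gcongr
  linarith

lemma EUFI_le_topScore (hs : 0 ≤ s) (i : ℕ) : EUFI n m s k i ≤ topScore s m := by
  rw [EUFI_eq_expect]
  exact expect_le univ_nonempty fun Q _ => util_le_topScore hs _ k i

lemma sum_mul_availableProb_le_EUFI (hs : 0 ≤ s) {L : ℕ} {i : Fin n} (hL : L ≤ k i) :
    ∑ r : Fin m with r.val < L, s (r + 1) * availableProb k i r ≤ EUFI n m s k i := by
  calc
    _ = 𝔼 Q : Fin n → Equiv.Perm (Fin m), ∑ r : Fin m with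
          r.val < L ∧ extendProfile n Q i r ∈ remaining (extendProfile n Q) k i, s (r + 1) := by
        simp_rw [availableProb, mul_expect, ← expect_sum_comm, mul_ite, mul_one, mul_zero,
          ← filter_filter, sum_filter _ (s := filter _ _), extendProfile_apply]
    _ ≤ EUFI n m s k i := by
        rw [EUFI_eq_expect]
        exact expect_le_expect fun Q _ => sum_available_le_util hs _ hL

lemma topScore_mul_le_EUFI (hs : 0 ≤ s) {L : ℕ} (hLm : L ≤ m) {i : Fin n} (hL : L ≤ k i) :
    topScore s L * (1 - (∑ j ∈ range i, k j : ℕ) / (m : ℝ)) ≤ EUFI n m s k i := by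
  rw [← sum_rank_lt_eq_topScore hLm, sum_mul]
  refine le_trans (sum_le_sum fun r _ => ?_) (sum_mul_availableProb_le_EUFI hs hL)
  exact mul_le_mul_of_nonneg_left (one_sub_picked_div_le_availableProb k i r) (hs _)

end ExpectedUtility

section LastTakesRest

/-- The vector of picks in which, among `n` agents sharing `m` items, all but the last pick `L`
items and the last one picks all the others. -/
def lastTakesRest (n m L : ℕ) : ℕ → ℕ :=
  fun i => if i + 1 < n then L else m - i * L

variable {n m L i : ℕ}

lemma sum_range_lastTakesRest_of_lt (hi : i < n) :
    ∑ j ∈ range i, lastTakesRest n m L j = i * L := by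
  have hconst : ∀ j ∈ range i, lastTakesRest n m L j = L := fun j hj =>
    if_pos (by have := mem_range.1 hj; lia)
  rw [sum_const_nat hconst, card_range]

lemma sum_range_lastTakesRest (hn : 0 < n) (hm : n * L ≤ m) :
    ∑ i ∈ range n, lastTakesRest n m L i = m := by
  obtain ⟨p, rfl⟩ := Nat.exists_eq_add_one.2 hn
  rw [sum_range_succ, sum_range_lastTakesRest_of_lt p.lt_succ_self, lastTakesRest,
    if_neg (lt_irrefl _)]
  exact Nat.add_sub_of_le ((Nat.mul_le_mul_right L p.le_succ).trans hm)

lemma le_lastTakesRest (hi : i < n) (hm : n * L ≤ m) : L ≤ lastTakesRest n m L i := by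
  have hle : (i + 1) * L ≤ m := (Nat.mul_le_mul_right L hi).trans hm
  rw [lastTakesRest]
  split_ifs
  · exact le_rfl
  · exact Nat.le_sub_of_add_le (by linarith)

lemma topScore_mul_le_EUFI_lastTakesRest {s : ℕ → ℝ} (hs : 0 ≤ s) (hi : i < n) (hm : n * L ≤ m) :
    topScore s L * (1 - (n * L : ℕ) / (m : ℝ)) ≤ EUFI n m s (lastTakesRest n m L) i := by
  have hLm : L ≤ m := (Nat.le_mul_of_pos_left L (by lia)).trans hm
  have hLnonneg := topScore_nonneg hs L
  refine le_trans ?_ (topScore_mul_le_EUFI hs hLm (i := ⟨i, hi⟩) (le_lastTakesRest hi hm))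
  rw [sum_range_lastTakesRest_of_lt hi]
  gcongr

end LastTakesRest

/-- A family of scoring vectors, one for each number `m` of items, is *top-concentrated* if a
fixed number of top ranks carries any prescribed fraction `1 - δ` of the total score, for all large
`m`. -/
def TopConcentrated (s : ℕ → ℕ → ℝ) : Prop :=
  ∀ δ : ℝ, 0 < δ → ∃ L : ℕ, ∀ᶠ m in atTop, (1 - δ) * topScore (s m) m ≤ topScore (s m) L

lemma TopConcentrated.eventually_exists_le_EUFI {s : ℕ → ℕ → ℝ} (hs : 0 ≤ s)
    (htop : TopConcentrated s) {n : ℕ} (hn : 0 < n) {δ : ℝ} (hδ : 0 < δ) :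
    ∀ᶠ m in atTop, ∃ k : ℕ → ℕ, ∑ i ∈ range n, k i = m ∧
      ∀ i < n, (1 - δ) * topScore (s m) m ≤ EUFI n m (s m) k i := by
  obtain ⟨L, hL⟩ := htop (δ / 2) (half_pos hδ)
  have hsmall : ∀ᶠ m : ℕ in atTop, ((n * L : ℕ) : ℝ) / m < δ / 2 :=
    (tendsto_const_div_atTop_nhds_zero_nat _).eventually_lt_const (half_pos hδ)
  filter_upwards [hL, hsmall, eventually_ge_atTop (n * L)] with m hLm hfrac hm
  refine ⟨lastTakesRest n m L, sum_range_lastTakesRest hn hm, fun i hi => ?_⟩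
  refine le_trans ?_ (topScore_mul_le_EUFI_lastTakesRest (hs m) hi hm)
  have hloss : topScore (s m) L * ((n * L : ℕ) / (m : ℝ)) ≤ topScore (s m) m * (δ / 2) := by
    have hle : topScore (s m) L ≤ topScore (s m) m :=
      topScore_mono (hs m) ((Nat.le_mul_of_pos_left L hn).trans hm)
    have hnonneg := topScore_nonneg (hs m) m
    gcongr
  linarith

section LexScore

lemma lexScore_nonneg (m : ℕ) : 0 ≤ lexScore m := fun _ => pow_nonneg zero_le_two _

lemma topScore_lexScore {m L : ℕ} (hL : L ≤ m) :
    topScore (lexScore m) L = 2 ^ m - 2 ^ (m - L) := by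
  induction L with
  | zero => simp [topScore]
  | succ L ih =>
    have hpow : (2 : ℝ) ^ (m - L) = 2 * 2 ^ (m - (L + 1)) := by
      rw [← pow_succ']
      congr 1
      lia
    rw [topScore, sum_range_succ, ← topScore, ih (by lia), lexScore, hpow]
    ring

lemma topScore_lexScore_self_pos {m : ℕ} (hm : 0 < m) : 0 < topScore (lexScore m) m := by
  rw [topScore_lexScore le_rfl, Nat.sub_self, pow_zero, sub_pos]
  exact one_lt_pow₀ one_lt_two hm.ne'

lemma topConcentrated_lexScore : TopConcentrated lexScore := by
  intro δ hδ
  obtain ⟨L, hL⟩ := exists_pow_lt_of_lt_one hδ (by norm_num : (1 / 2 : ℝ) < 1)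
  refine ⟨L, ?_⟩
  filter_upwards [eventually_ge_atTop L, eventually_gt_atTop 0] with m hLm hm
  have hpow : (2 : ℝ) ^ (m - L) = (1 / 2) ^ L * 2 ^ m := by
    rw [pow_sub₀ _ two_ne_zero hLm, one_div, inv_pow, mul_comm]
  have hhalf : (1 / 2 : ℝ) ^ L ≤ 1 := pow_le_one₀ (by norm_num) (by norm_num)
  have htotal : topScore (lexScore m) m = 2 ^ m - 1 := by simp [topScore_lexScore le_rfl]
  calc (1 - δ) * topScore (lexScore m) m ≤ (1 - (1 / 2) ^ L) * topScore (lexScore m) m := by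
        have := (topScore_lexScore_self_pos hm).le
        gcongr
    _ ≤ topScore (lexScore m) L := by
        rw [htotal, topScore_lexScore hLm, hpow]
        linarith

end LexScore

lemma sup'_sub_inf'_div_sum_lt {ι K : Type*} [Field K] [LinearOrder K] [IsStrictOrderedRing K]
    {t : Finset ι} (ht : t.Nonempty) {f : ι → K} {a b ε : K} (ha : 0 < a) (hε : 0 < ε)
    (hlow : a ≤ t.inf' ht f) (hupp : t.sup' ht f ≤ b) (hab : b - a < ε * a) :
    (t.sup' ht f - t.inf' ht f) / ∑ i ∈ t, f i < ε := by
  have hf : ∀ i ∈ t, a ≤ f i := (le_inf'_iff ht f).1 hlow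
  have hsum : a ≤ ∑ i ∈ t, f i := by
    obtain ⟨i, hi⟩ := ht
    exact (hf i hi).trans (single_le_sum (fun j hj => ha.le.trans (hf j hj)) hi)
  rw [div_lt_iff₀ (ha.trans_le hsum)]
  calc t.sup' ht f - t.inf' ht f ≤ b - a := sub_le_sub hupp hlow
    _ < ε * a := hab
    _ ≤ ε * ∑ i ∈ t, f i := by gcongr

theorem lex_egalitarian_optima_equalize_general {s : ℕ → ℕ → ℝ} (hs : 0 ≤ s)
    (hpos : ∀ᶠ m in atTop, 0 < topScore (s m) m) (htop : TopConcentrated s) (n : ℕ) (hn : 0 < n) :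
    ∀ ε : ℝ, 0 < ε → ∃ M : ℕ, ∀ m : ℕ, M ≤ m →
      ∀ k : ℕ → ℕ,
        (∀ k' : ℕ → ℕ, (∑ i ∈ range n, k' i = m) →
          (range n).inf' (nonempty_range_iff.mpr hn.ne') (EUFI n m (s m) k') ≤
            (range n).inf' (nonempty_range_iff.mpr hn.ne') (EUFI n m (s m) k)) →
        ((range n).sup' (nonempty_range_iff.mpr hn.ne') (EUFI n m (s m) k) -
            (range n).inf' (nonempty_range_iff.mpr hn.ne') (EUFI n m (s m) k)) /
          (∑ i ∈ range n, EUFI n m (s m) k i) < ε := by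
  intro ε hε
  obtain ⟨δ, hδ, hδε⟩ := exists_between (show 0 < ε / (1 + ε) by positivity)
  rw [lt_div_iff₀ (by positivity)] at hδε
  have hδ_lt : δ < 1 := by nlinarith
  refine eventually_atTop.1 ?_
  filter_upwards [htop.eventually_exists_le_EUFI hs hn hδ, hpos] with m ⟨k', hsum, hk'⟩ hT k hopt
  refine sup'_sub_inf'_div_sum_lt _ (a := (1 - δ) * topScore (s m) m) (b := topScore (s m) m)
    (mul_pos (sub_pos.2 hδ_lt) hT) hε ?_ ?_ ?_
  · exact (le_inf' _ _ fun i hi => hk' i (mem_range.1 hi)).trans (hopt k' hsum)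
  · exact sup'_le _ _ fun i _ => EUFI_le_topScore (hs m) i
  · calc topScore (s m) m - (1 - δ) * topScore (s m) m = δ * topScore (s m) m := by ring
      _ < ε * (1 - δ) * topScore (s m) m := by gcongr; linarith
      _ = ε * ((1 - δ) * topScore (s m) m) := mul_assoc ..

/-- Fix `n ≥ 1` agents and consider the full independence model with the lexicographic
scoring vector `s_j = 2^(m-j)`.  For every `ε > 0` there is `M` such that for all `m ≥ M`
and ALL vectors `k` maximizing the egalitarian welfare `min_a EU^k(a)` among the vectors of
nonnegative integers summing to `m`, the relative spread
`(max_a EU^k(a) - min_a EU^k(a)) / (∑_a EU^k(a))` is below `ε`. -/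
theorem lex_egalitarian_optima_equalize (n : ℕ) (hn : 0 < n) :
    ∀ ε : ℝ, 0 < ε → ∃ M : ℕ, ∀ m : ℕ, M ≤ m →
      ∀ k : ℕ → ℕ, (∑ i ∈ Finset.range n, k i = m) →
        (∀ k' : ℕ → ℕ, (∑ i ∈ Finset.range n, k' i = m) →
          (Finset.range n).inf' (Finset.nonempty_range_iff.mpr hn.ne')
              (EUFI n m (lexScore m) k') ≤
            (Finset.range n).inf' (Finset.nonempty_range_iff.mpr hn.ne')
              (EUFI n m (lexScore m) k)) →
        ((Finset.range n).sup' (Finset.nonempty_range_iff.mpr hn.ne')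
              (EUFI n m (lexScore m) k) -
            (Finset.range n).inf' (Finset.nonempty_range_iff.mpr hn.ne')
              (EUFI n m (lexScore m) k)) /
          (∑ i ∈ Finset.range n, EUFI n m (lexScore m) k i) < ε := by
  intro ε hε
  obtain ⟨M, hM⟩ := lex_egalitarian_optima_equalize_general lexScore_nonneg
    ((eventually_gt_atTop 0).mono fun _ => topScore_lexScore_self_pos) topConcentrated_lexScore
    n hn ε hε
  exact ⟨M, fun m hm k _ => hM m hm k⟩
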